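/- Let R be a commutative ring, G a finite abelian group, and RG the group ring of G over R; regard R as an RG-module via the augmentation map RG → R sending each element of G to 1. If R has finite projective dimension as an RG-module, then the global cotorsion dimensions of R and RG coincide: for every nonnegative integer n, every flat RG-module has projective dimension at most n over RG if and only if every flat R-module has projective dimension at most n over R. -/

import Mathlib

open CategoryTheory

noncomputable section

universe u

/-- The `j`-th Ext group of the `R`-modules `M` and `N`. -/
def extGroup (R : Type u) [CommRing R] (M N : ModuleCat.{u} R) (j : ℕ) : ModuleCat R :=
  ((Ext R (ModuleCat.{u} R) j).obj (Opposite.op M)).obj N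

/-- `Ext_R^j(M, N) = 0`. -/
def ExtVanish (R : Type u) [CommRing R] (M N : ModuleCat.{u} R) (j : ℕ) : Prop :=
  Subsingleton (extGroup R M N j)

/-- The projective dimension of `M` is at most `n`
(via the standard Ext-vanishing characterization). -/
def ProjDimLE (R : Type u) [CommRing R] (M : ModuleCat.{u} R) (n : ℕ) : Prop :=
  ∀ (N : ModuleCat.{u} R) (j : ℕ), n < j → ExtVanish R M N j

/-- `M` has finite projective dimension. -/
def HasFinProjDim (R : Type u) [CommRing R] (M : ModuleCat.{u} R) : Prop :=
  ∃ n, ProjDimLE R M n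

/-- `R` is a coherent ring: every finitely generated ideal is finitely presented. -/
def IsCoherentRing (R : Type u) [CommRing R] : Prop :=
  ∀ I : Ideal R, I.FG → Module.FinitePresentation R I
/-- The augmentation ring homomorphism `RG → R`, sending each element of `G` to `1`. -/
def augmentation (R : Type u) [CommRing R] (G : Type u) [CommGroup G] :
    MonoidAlgebra R G →+* R :=
  ((MonoidAlgebra.lift R R G) 1).toRingHom

/-!
The identity of a projective `RG`-module is the trace of an `R`-endomorphism; on `RG` itself take
the projection onto the coefficient of `1`. Averaging against it turns `R`-linear retractions into
`RG`-linear ones, so projective `RG`-modules are injective relative to `R`. Hence the syzygies of an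
`R`-projective module of finite projective dimension over `RG` split off one after the other: the
trivial module `R` is projective over `RG`, and the resulting endomorphism of `R` of trace one
inverts `|G|`. Averaging then makes each `RG`-module `M` a direct summand of `RG ⊗ M`; as induction
and restriction are exact and preserve projectives, `M` has the same projective dimension over `RG`
and over `R`. Moreover the augmentation makes each `R`-module `F` a direct summand of the
restriction of `RG ⊗ F`, and both functors preserve flatness.
-/

section Ext

variable {R : Type u} [CommRing R] {M : ModuleCat.{u} R}

lemma extVanish_succ_iff (P : ProjectiveResolution M) (N : ModuleCat.{u} R) (j : ℕ) :
    ExtVanish R M N (j + 1) ↔ ∀ f : P.complex.X (j + 1) ⟶ N,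
      P.complex.d (j + 2) (j + 1) ≫ f = 0 → ∃ g, P.complex.d (j + 1) j ≫ g = f := by
  unfold ExtVanish extGroup
  rw [← ModuleCat.isZero_iff_subsingleton, (P.isoExt (R := R) (j + 1) N).isZero_iff,
    ← HomologicalComplex.exactAt_iff_isZero_homology,
    HomologicalComplex.exactAt_iff' _ j (j + 1) (j + 2) (by simp) (by simp),
    ShortComplex.moduleCat_exact_iff]
  rfl

lemma subsingleton_ext_succ_iff (P : ProjectiveResolution M) (N : ModuleCat.{u} R) (j : ℕ) :
    Subsingleton (Abelian.Ext M N (j + 1)) ↔ ∀ f : P.complex.X (j + 1) ⟶ N,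
      P.complex.d (j + 2) (j + 1) ≫ f = 0 → ∃ g, P.complex.d (j + 1) j ≫ g = f := by
  refine ⟨fun _ f hf ↦ (P.extMk_eq_zero_iff f (j + 2) rfl hf j rfl).1 (Subsingleton.elim _ _),
    fun h ↦ subsingleton_of_forall_eq 0 fun e ↦ ?_⟩
  obtain ⟨f, hf, rfl⟩ := P.extMk_surjective e (j + 2) rfl
  exact (P.extMk_eq_zero_iff f (j + 2) rfl hf j rfl).2 (h f hf)

lemma extVanish_succ_iff_subsingleton_ext (N : ModuleCat.{u} R) (j : ℕ) :
    ExtVanish R M N (j + 1) ↔ Subsingleton (Abelian.Ext M N (j + 1)) :=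
  (extVanish_succ_iff (projectiveResolution M) N j).trans
    (subsingleton_ext_succ_iff (projectiveResolution M) N j).symm

lemma projDimLE_iff_hasProjectiveDimensionLE {n : ℕ} :
    ProjDimLE R M n ↔ HasProjectiveDimensionLE M n := by
  rw [HasProjectiveDimensionLE, hasProjectiveDimensionLT_iff]
  constructor
  · rintro h (_ | i) hi N e
    · simp at hi
    · have := (extVanish_succ_iff_subsingleton_ext N i).1 (h N (i + 1) hi)
      exact Subsingleton.elim _ _
  · rintro h N (_ | j) hj
    · simp at hj
    · exact (extVanish_succ_iff_subsingleton_ext N j).2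
        (subsingleton_of_forall_eq 0 fun e ↦ h (j + 1) hj e)

end Ext

section RelativeHomologicalAlgebra

open Limits

universe v₁ v₂ u₁ u₂

variable {C : Type u₁} [Category.{v₁} C] {D : Type u₂} [Category.{v₂} D]

/-- Relative projectivity of `X` in the sense of Hochschild: an epimorphism onto `X` splits as soon
as its image under `F` does. -/
def IsRelativelyProjective (F : C ⥤ D) (X : C) : Prop :=
  ∀ ⦃Y : C⦄ (p : Y ⟶ X), IsSplitEpi (F.map p) → IsSplitEpi p

/-- Relative injectivity of `X` in the sense of Hochschild: a monomorphism out of `X` splits as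
soon as its image under `F` does. -/
def IsRelativelyInjective (F : C ⥤ D) (X : C) : Prop :=
  ∀ ⦃Y : C⦄ (i : X ⟶ Y), IsSplitMono (F.map i) → IsSplitMono i

section Adjunction

variable {L : C ⥤ D} {U : D ⥤ C} (adj : L ⊣ U)

/-- The triangle identity exhibiting `U Y` as a retract of `U L U Y`. -/
def retractRightAdjointObj (Y : D) : Retract (U.obj Y) (U.obj (L.obj (U.obj Y))) where
  i := adj.unit.app (U.obj Y)
  r := U.map (adj.counit.app Y)

include adj in
lemma IsRelativelyProjective.nonempty_retract {Y : D} (hY : IsRelativelyProjective U Y) :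
    Nonempty (Retract Y (L.obj (U.obj Y))) := by
  obtain ⟨⟨s⟩⟩ := hY (adj.counit.app Y) ⟨⟨(retractRightAdjointObj adj Y).splitEpi⟩⟩
  exact ⟨⟨s.section_, adj.counit.app Y, s.id⟩⟩

end Adjunction

variable [Abelian C] [Abelian D] [EnoughProjectives C]

lemma shortExact_kernel_projectiveπ (X : C) :
    (ShortComplex.mk _ _ (kernel.condition (Projective.π X))).ShortExact where
  exact := ShortComplex.exact_kernel _

lemma hasProjectiveDimensionLE_obj (F : C ⥤ D) [F.Additive] [PreservesFiniteLimits F]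
    [PreservesFiniteColimits F] [F.PreservesProjectiveObjects] (n : ℕ) (X : C)
    [HasProjectiveDimensionLE X n] : HasProjectiveDimensionLE (F.obj X) n := by
  induction n generalizing X with
  | zero =>
    have : Projective X := (projective_iff_hasProjectiveDimensionLE_zero _).2 ‹_›
    exact (projective_iff_hasProjectiveDimensionLE_zero _).1 inferInstance
  | succ n ih =>
    have hS := shortExact_kernel_projectiveπ X
    have := (hS.hasProjectiveDimensionLT_X₃_iff n (Projective.projective_over X)).1 ‹_›
    exact ((hS.map_of_exact F).hasProjectiveDimensionLT_X₃_iff n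
      (F.projective_obj (Projective.over X))).2 (ih _)

lemma projective_of_projective_obj_of_hasProjectiveDimensionLE (F : C ⥤ D) [F.Additive]
    [PreservesFiniteLimits F] [PreservesFiniteColimits F] [F.PreservesProjectiveObjects]
    (hF : ∀ (P : C) [Projective P], IsRelativelyInjective F P) (n : ℕ) (X : C)
    [HasProjectiveDimensionLE X n] [Projective (F.obj X)] : Projective X := by
  induction n generalizing X with
  | zero => exact (projective_iff_hasProjectiveDimensionLE_zero _).2 ‹_›
  | succ n ih =>
    have hS := shortExact_kernel_projectiveπ X
    set S := ShortComplex.mk _ _ (kernel.condition (Projective.π X))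
    have hFS := hS.map_of_exact F
    have : Projective (S.map F).X₃ := ‹Projective (F.obj X)›
    let σ : (S.map F).Splitting := hFS.splittingOfProjective
    have : Projective (S.map F).X₂ := F.projective_obj (Projective.over X)
    have : Projective (F.obj S.X₁) := Retract.projective ⟨(S.map F).f, σ.r, σ.f_r⟩
    have := (hS.hasProjectiveDimensionLT_X₃_iff n (Projective.projective_over X)).1 ‹_›
    have : Projective S.X₁ := ih S.X₁
    obtain ⟨⟨r⟩⟩ := hF S.X₁ S.f σ.isSplitMono_f
    let τ := ShortComplex.Splitting.ofExactOfRetraction S hS.exact r.retraction r.id hS.epi_g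
    exact (Retract.mk τ.s S.g τ.s_g).projective

lemma IsRelativelyProjective.hasProjectiveDimensionLE_obj_iff [EnoughProjectives D]
    {L : C ⥤ D} {U : D ⥤ C} (adj : L ⊣ U) [U.Additive] [PreservesFiniteLimits L]
    [PreservesFiniteColimits U] [U.PreservesProjectiveObjects] {Y : D}
    (hY : IsRelativelyProjective U Y) (n : ℕ) :
    HasProjectiveDimensionLE (U.obj Y) n ↔ HasProjectiveDimensionLE Y n := by
  have := adj.leftAdjoint_preservesColimits
  have := adj.rightAdjoint_preservesLimits
  have := adj.left_adjoint_additive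
  have := Functor.preservesProjectiveObjects_of_adjunction_of_preservesEpimorphisms adj
  refine ⟨fun _ ↦ ?_, fun _ ↦ hasProjectiveDimensionLE_obj U n Y⟩
  have := hasProjectiveDimensionLE_obj L n (U.obj Y)
  obtain ⟨r⟩ := hY.nonempty_retract adj
  exact r.hasProjectiveDimensionLT (n + 1)

end RelativeHomologicalAlgebra

section ChangeOfRings

open Limits ModuleCat

lemma projective_trans (R A M : Type*) [CommRing R] [Ring A] [Algebra R A] [Module.Projective R A]
    [AddCommGroup M] [Module A M] [Module R M] [IsScalarTower R A M] [Module.Projective A M] :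
    Module.Projective R M := by
  classical
  have : Module.Projective R (M →₀ A) :=
    Module.Projective.of_equiv (finsuppLequivDFinsupp (ι := M) (M := A) R).symm
  obtain ⟨s, hs⟩ := (Module.projective_def' (R := A) (P := M)).1 inferInstance
  exact Module.Projective.of_split (s.restrictScalars R)
    ((Finsupp.linearCombination A id).restrictScalars R)
    (LinearMap.ext fun x ↦ LinearMap.congr_fun hs x)

lemma preservesProjectiveObjects_restrictScalars (R A : Type u) [CommRing R] [Ring A] [Algebra R A]
    [Module.Projective R A] :
    (restrictScalars.{u} (algebraMap R A)).PreservesProjectiveObjects where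
  projective_obj {P} _ := by
    let : Module R P := Module.restrictScalars R A P
    have : IsScalarTower R A P := IsScalarTower.restrictScalars R A P
    rw [← IsProjective.iff_projective]
    have : Module.Projective A P := inferInstance
    exact projective_trans R A P

/-- Inflating along a retraction `ε` of `f` and then restricting along `f` does nothing. -/
def restrictScalarsRetractionIso {R A : Type u} [Ring R] [Ring A] {f : R →+* A} {ε : A →+* R}
    (h : ε.comp f = RingHom.id R) (M : ModuleCat.{u} R) :
    (restrictScalars.{u} f).obj ((restrictScalars.{u} ε).obj M) ≅ M :=
  (restrictScalarsComp'App f ε _ h.symm M).symm ≪≫ restrictScalarsId'App _ rfl M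

variable {R A : Type u} [CommRing R] [CommRing A]

lemma flat_extendScalars_obj (f : R →+* A) (M : ModuleCat.{u} R) [Module.Flat R M] :
    Module.Flat A ((extendScalars.{u, u, u} f).obj M) := by
  algebraize [f]
  exact Module.Flat.baseChange R A M

lemma flat_restrictScalars_obj [Algebra R A] [Module.Flat R A] (M : ModuleCat.{u} A)
    [Module.Flat A M] : Module.Flat R ((restrictScalars.{u} (algebraMap R A)).obj M) := by
  let : Module R M := Module.restrictScalars R A M
  have : IsScalarTower R A M := IsScalarTower.restrictScalars R A M
  exact Module.Flat.trans R A M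

/-- The unit `M → A ⊗[R] M` of extension of scalars is split by a retraction `ε` of `f`. -/
def retractExtendScalars {f : R →+* A} {ε : A →+* R} (h : ε.comp f = RingHom.id R)
    (M : ModuleCat.{u} R) :
    Retract M ((restrictScalars.{u} f).obj ((extendScalars.{u, u, u} f).obj M)) :=
  let e := restrictScalarsRetractionIso h M
  (Retract.ofIso e.symm).trans <|
    (retractRightAdjointObj (extendRestrictScalarsAdj f) _).trans <|
      Retract.ofIso ((extendScalars.{u, u, u} f ⋙ restrictScalars.{u} f).mapIso e)

variable [Algebra R A] [Module.Projective R A]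

variable (R A) in
lemma preservesFiniteLimits_extendScalars :
    PreservesFiniteLimits (extendScalars.{u, u, u} (algebraMap R A)) :=
  preservesFiniteLimits_extendScalars_of_flat (RingHom.flat_algebraMap_iff.2 inferInstance)

lemma hasProjectiveDimensionLE_of_extendScalars {ε : A →+* R}
    (h : ε.comp (algebraMap R A) = RingHom.id R) (n : ℕ) (M : ModuleCat.{u} R)
    [HasProjectiveDimensionLE ((extendScalars.{u, u, u} (algebraMap R A)).obj M) n] :
    HasProjectiveDimensionLE M n := by
  have := preservesProjectiveObjects_restrictScalars R A
  have := hasProjectiveDimensionLE_obj (restrictScalars.{u} (algebraMap R A)) n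
    ((extendScalars.{u, u, u} (algebraMap R A)).obj M)
  exact (retractExtendScalars h M).hasProjectiveDimensionLT (n + 1)

lemma hasProjectiveDimensionLE_restrictScalars_iff {M : ModuleCat.{u} A}
    (hM : IsRelativelyProjective (restrictScalars.{u} (algebraMap R A)) M) (n : ℕ) :
    HasProjectiveDimensionLE ((restrictScalars.{u} (algebraMap R A)).obj M) n ↔
      HasProjectiveDimensionLE M n := by
  have := preservesFiniteLimits_extendScalars R A
  have := preservesProjectiveObjects_restrictScalars R A
  exact hM.hasProjectiveDimensionLE_obj_iff (extendRestrictScalarsAdj (algebraMap R A)) n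

end ChangeOfRings

section Higman

open scoped MonoidAlgebra

variable {R G M N L : Type*} [CommRing R] [Group G] [Fintype G]
  [AddCommGroup M] [Module R M] [Module R[G] M] [IsScalarTower R R[G] M]
  [AddCommGroup N] [Module R N] [Module R[G] N] [IsScalarTower R R[G] N]
  [AddCommGroup L] [Module R L] [Module R[G] L] [IsScalarTower R R[G] L]

lemma sumOfConjugatesEquivariant_restrictScalars_comp (f : N →ₗ[R[G]] L) (h : M →ₗ[R] N) :
    (f.restrictScalars R ∘ₗ h).sumOfConjugatesEquivariant G =
      f ∘ₗ h.sumOfConjugatesEquivariant G := by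
  ext x
  simp [LinearMap.sumOfConjugatesEquivariant_apply, LinearMap.conjugate_apply]

lemma sumOfConjugatesEquivariant_comp_restrictScalars (h : N →ₗ[R] L) (f : M →ₗ[R[G]] N) :
    (h ∘ₗ f.restrictScalars R).sumOfConjugatesEquivariant G =
      h.sumOfConjugatesEquivariant G ∘ₗ f := by
  ext x
  simp [LinearMap.sumOfConjugatesEquivariant_apply, LinearMap.conjugate_apply]

variable (R G M) in
/-- Higman's criterion for an `R[G]`-module `M`: the identity of `M` is the trace
`∑ g, g⁻¹ θ g` of some `R`-linear endomorphism `θ`. -/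
def HigmanCriterion : Prop :=
  ∃ θ : M →ₗ[R] M, θ.sumOfConjugatesEquivariant G = LinearMap.id

namespace HigmanCriterion

lemma of_isUnit_natCard (h : IsUnit (Nat.card G : R)) : HigmanCriterion R G M := by
  obtain ⟨u, hu⟩ := h.exists_left_inv
  refine ⟨u • LinearMap.id, LinearMap.ext fun x ↦ ?_⟩
  have conjugate_smul (g : G) : (u • (LinearMap.id : M →ₗ[R] M)).conjugate g x = u • x := by
    simp [LinearMap.conjugate_apply, smul_comm _ u, smul_smul, MonoidAlgebra.single_mul_single,
      ← MonoidAlgebra.one_def]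
  simp only [LinearMap.sumOfConjugatesEquivariant_apply, conjugate_smul, Finset.sum_const,
    Finset.card_univ, ← Nat.card_eq_fintype_card, LinearMap.id_apply]
  rw [← Nat.cast_smul_eq_nsmul R, smul_smul, mul_comm, hu, one_smul]

lemma isUnit_natCard [Module R[G] R] [IsScalarTower R R[G] R]
    (h_triv : ∀ (g : G) (x : R), MonoidAlgebra.single g (1 : R) • x = x)
    (h : HigmanCriterion R G R) : IsUnit (Nat.card G : R) := by
  obtain ⟨θ, hθ⟩ := h
  have card_mul : (Nat.card G : R) * θ 1 = 1 := by
    simpa [LinearMap.sumOfConjugatesEquivariant_apply, LinearMap.conjugate_apply, h_triv]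
      using LinearMap.congr_fun hθ 1
  exact IsUnit.of_mul_eq_one _ card_mul

lemma of_retract (h : HigmanCriterion R G M) (i : N →ₗ[R[G]] M) (r : M →ₗ[R[G]] N)
    (hri : r ∘ₗ i = LinearMap.id) : HigmanCriterion R G N := by
  obtain ⟨θ, hθ⟩ := h
  refine ⟨r.restrictScalars R ∘ₗ θ ∘ₗ i.restrictScalars R, ?_⟩
  rw [sumOfConjugatesEquivariant_restrictScalars_comp,
    sumOfConjugatesEquivariant_comp_restrictScalars, hθ, LinearMap.id_comp, hri]

lemma finsupp (h : HigmanCriterion R G M) (ι : Type*) : HigmanCriterion R G (ι →₀ M) := by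
  obtain ⟨θ, hθ⟩ := h
  refine ⟨Finsupp.mapRange.linearMap θ, LinearMap.ext fun x ↦ Finsupp.ext fun i ↦ ?_⟩
  simpa [LinearMap.sumOfConjugatesEquivariant_apply, LinearMap.conjugate_apply]
    using LinearMap.congr_fun hθ (x i)

variable (R G) in
lemma monoidAlgebra : HigmanCriterion R G R[G] := by
  classical
  let θ : R[G] →ₗ[R] R[G] := MonoidAlgebra.lsingle 1 ∘ₗ Finsupp.lapply 1 ∘ₗ
    (MonoidAlgebra.coeffLinearEquiv R).toLinearMap
  have θ_single (g : G) (r : R) : θ (MonoidAlgebra.single g r) =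
      if g = 1 then MonoidAlgebra.single 1 r else 0 := by
    split_ifs with hg <;> simp [θ, hg]
  refine ⟨θ, LinearMap.ext_ring ?_⟩
  simp [LinearMap.sumOfConjugatesEquivariant_apply, LinearMap.conjugate_apply,
    MonoidAlgebra.one_def, θ_single]

lemma of_projective [Module.Projective R[G] M] : HigmanCriterion R G M := by
  obtain ⟨s, hs⟩ := (Module.projective_def' (R := R[G]) (P := M)).1 inferInstance
  exact ((monoidAlgebra R G).finsupp M).of_retract s _ hs

lemma exists_equivariant_retraction (h : HigmanCriterion R G M) (i : M →ₗ[R[G]] N)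
    (r : N →ₗ[R] M) (hri : r ∘ₗ i.restrictScalars R = LinearMap.id) :
    ∃ r' : N →ₗ[R[G]] M, r' ∘ₗ i = LinearMap.id := by
  obtain ⟨θ, hθ⟩ := h
  refine ⟨(θ ∘ₗ r).sumOfConjugatesEquivariant G, ?_⟩
  rw [← sumOfConjugatesEquivariant_comp_restrictScalars, LinearMap.comp_assoc, hri,
    LinearMap.comp_id, hθ]

lemma exists_equivariant_section (h : HigmanCriterion R G M) (p : N →ₗ[R[G]] M)
    (s : M →ₗ[R] N) (hps : p.restrictScalars R ∘ₗ s = LinearMap.id) :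
    ∃ s' : M →ₗ[R[G]] N, p ∘ₗ s' = LinearMap.id := by
  obtain ⟨θ, hθ⟩ := h
  refine ⟨(s ∘ₗ θ).sumOfConjugatesEquivariant G, ?_⟩
  rw [← sumOfConjugatesEquivariant_restrictScalars_comp, ← LinearMap.comp_assoc, hps,
    LinearMap.id_comp, hθ]

end HigmanCriterion

end Higman

section GroupRing

open ModuleCat
open scoped MonoidAlgebra

section

variable {R G : Type u} [CommRing R] [Group G] [Finite G]

lemma isRelativelyInjective_groupRing_of_projective (P : ModuleCat.{u} R[G]) [Projective P] :
    IsRelativelyInjective (restrictScalars.{u} (algebraMap R R[G])) P := by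
  rintro Y i ⟨⟨r⟩⟩
  have := Fintype.ofFinite G
  let : Module R P := Module.restrictScalars R R[G] P
  have : IsScalarTower R R[G] P := IsScalarTower.restrictScalars R R[G] P
  let : Module R Y := Module.restrictScalars R R[G] Y
  have : IsScalarTower R R[G] Y := IsScalarTower.restrictScalars R R[G] Y
  have hP : HigmanCriterion R G P := .of_projective
  obtain ⟨r', hr'⟩ := hP.exists_equivariant_retraction i.hom
    (show Y →ₗ[R] P from r.retraction.hom) (congrArg ModuleCat.Hom.hom r.id)
  exact ⟨⟨ofHom r', ModuleCat.hom_ext hr'⟩⟩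

lemma isRelativelyProjective_groupRing_of_isUnit_natCard (h : IsUnit (Nat.card G : R))
    (M : ModuleCat.{u} R[G]) :
    IsRelativelyProjective (restrictScalars.{u} (algebraMap R R[G])) M := by
  rintro Y p ⟨⟨s⟩⟩
  have := Fintype.ofFinite G
  let : Module R M := Module.restrictScalars R R[G] M
  have : IsScalarTower R R[G] M := IsScalarTower.restrictScalars R R[G] M
  let : Module R Y := Module.restrictScalars R R[G] Y
  have : IsScalarTower R R[G] Y := IsScalarTower.restrictScalars R R[G] Y
  have hM : HigmanCriterion R G M := .of_isUnit_natCard h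
  obtain ⟨s', hs'⟩ := hM.exists_equivariant_section p.hom
    (show M →ₗ[R] Y from s.section_.hom) (congrArg ModuleCat.Hom.hom s.id)
  exact ⟨⟨ofHom s', ModuleCat.hom_ext hs'⟩⟩

end

variable {R G : Type u} [CommRing R] [CommGroup G]

lemma augmentation_single (g : G) (r : R) :
    augmentation R G (MonoidAlgebra.single g r) = r := by
  simp [augmentation]

variable (R G) in
lemma augmentation_comp_algebraMap :
    (augmentation R G).comp (algebraMap R R[G]) = RingHom.id R :=
  RingHom.ext (augmentation_single 1)

variable (R G) in
lemma isUnit_natCard_of_hasFinProjDim [Finite G]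
    (hfin : letI : Module R[G] R := Module.compHom R (augmentation R G)
      HasFinProjDim R[G] (ModuleCat.of R[G] R)) : IsUnit (Nat.card G : R) := by
  have := Fintype.ofFinite G
  let : Module R[G] R := Module.compHom R (augmentation R G)
  have : IsScalarTower R R[G] R := .of_algebraMap_smul fun r x ↦
    congrArg (· * x) (augmentation_single 1 r)
  obtain ⟨n, hn⟩ := hfin
  have := projDimLE_iff_hasProjectiveDimensionLE.1 hn
  have := preservesProjectiveObjects_restrictScalars R R[G]
  have : Projective ((restrictScalars.{u} (algebraMap R R[G])).obj (ModuleCat.of R[G] R)) :=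
    .of_iso (restrictScalarsRetractionIso (augmentation_comp_algebraMap R G)
      (ModuleCat.of R R)).symm inferInstance
  have : Projective (ModuleCat.of R[G] R) :=
    projective_of_projective_obj_of_hasProjectiveDimensionLE
      (restrictScalars.{u} (algebraMap R R[G]))
      (fun P _ ↦ isRelativelyInjective_groupRing_of_projective P) n _
  have : Module.Projective R[G] R := (IsProjective.iff_projective _).2 this
  refine HigmanCriterion.isUnit_natCard (fun g x ↦ ?_) HigmanCriterion.of_projective
  exact (congrArg (· * x) (augmentation_single g 1)).trans (one_mul x)

end GroupRing

theorem stmt10 (R : Type u) [CommRing R] (G : Type u) [CommGroup G] [Finite G]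
    (hfin : letI : Module (MonoidAlgebra R G) R := Module.compHom R (augmentation R G)
      HasFinProjDim (MonoidAlgebra R G) (ModuleCat.of (MonoidAlgebra R G) R))
    (n : ℕ) :
    (∀ (F : ModuleCat.{u} (MonoidAlgebra R G)), Module.Flat (MonoidAlgebra R G) F →
      ProjDimLE (MonoidAlgebra R G) F n) ↔
    (∀ (F : ModuleCat.{u} R), Module.Flat R F → ProjDimLE R F n) := by
  have h_unit := isUnit_natCard_of_hasFinProjDim R G hfin
  simp only [projDimLE_iff_hasProjectiveDimensionLE]
  refine ⟨fun h F _ ↦ ?_, fun h F _ ↦ ?_⟩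
  · have := h _ (flat_extendScalars_obj (algebraMap R (MonoidAlgebra R G)) F)
    exact hasProjectiveDimensionLE_of_extendScalars (augmentation_comp_algebraMap R G) n F
  · have := h _ (flat_restrictScalars_obj F)
    exact (hasProjectiveDimensionLE_restrictScalars_iff
      (isRelativelyProjective_groupRing_of_isUnit_natCard h_unit F) n).1 this

end
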